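/- arXiv:2208.07154 — 4 statements merged into one kernel-verified Lean document; each statement's English description precedes it below -/
import Mathlib

section
/- For every irrational x ∈ (0,1) the denominators of the convergents of its odd continued fraction expansion satisfy q_{n−1} > 0 for n ≥ 1 and a_n(x) − 2 + G < q_n/q_{n−1} < a_n(x) + G for every n ≥ 1 (in particular q_n > 0 for all n ≥ 0). -/
open Real MeasureTheory Filter Set

namespace OCF

/-- The golden ratio `G = (1+√5)/2`. -/
noncomputable def G : ℝ := (1 + Real.sqrt 5) / 2

/-- `g = (√5-1)/2`. -/
noncomputable def gg : ℝ := (Real.sqrt 5 - 1) / 2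

/-- The odd Gauss map. -/
noncomputable def T (x : ℝ) : ℝ :=
  if x = 0 then 0
  else if Odd ⌊1 / x⌋ then Int.fract (1 / x) else 1 - Int.fract (1 / x)

/-- `eps x n` is `ε_n(x)`; by convention `ε_0(x) = 1`. -/
noncomputable def eps (x : ℝ) : ℕ → ℤ
  | 0 => 1
  | n + 1 => if Odd ⌊1 / (T^[n] x)⌋ then 1 else -1

/-- `a x n` is the `n`-th odd partial quotient `a_n(x)` (for `n ≥ 1`). -/
noncomputable def a (x : ℝ) : ℕ → ℤ
  | 0 => 1
  | n + 1 => if Odd ⌊1 / (T^[n] x)⌋ then ⌊1 / (T^[n] x)⌋ else 1 + ⌊1 / (T^[n] x)⌋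

/-- `p x (n+1)` is the convergent numerator `p_n`; `p x 0 = p_{-1} = 1`, `p x 1 = p_0 = 0`. -/
noncomputable def p (x : ℝ) : ℕ → ℝ
  | 0 => 1
  | 1 => 0
  | n + 2 => (a x (n + 1) : ℝ) * p x (n + 1) + (eps x n : ℝ) * p x n

/-- `q x (n+1)` is the convergent denominator `q_n`; `q x 0 = q_{-1} = 0`, `q x 1 = q_0 = 1`. -/
noncomputable def q (x : ℝ) : ℕ → ℝ
  | 0 => 0
  | 1 => 1
  | n + 2 => (a x (n + 1) : ℝ) * q x (n + 1) + (eps x n : ℝ) * q x n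

end OCF

open OCF

namespace OCF

theorem T_mem (y : ℝ) (h : Irrational y ∧ 0 < y ∧ y < 1) :
    Irrational (T y) ∧ 0 < T y ∧ T y < 1 := by
  obtain ⟨hi, h0, h1⟩ := h
  have hi' : Irrational (1 / y) := by
    rw [one_div]; exact hi.inv
  have hf : Irrational (Int.fract (1 / y)) := by
    unfold Int.fract
    exact hi'.sub_intCast _
  have hf0 : 0 < Int.fract (1 / y) :=
    lt_of_le_of_ne (Int.fract_nonneg _) (fun h => hf.ne_zero h.symm)
  have hf1 := Int.fract_lt_one (1 / y)
  unfold T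
  rw [if_neg h0.ne']
  split_ifs
  · exact ⟨hf, hf0, hf1⟩
  · refine ⟨?_, by linarith, by linarith⟩
    have := hf.intCast_sub 1
    simpa using this

theorem Titer_mem (x : ℝ) (h : Irrational x ∧ 0 < x ∧ x < 1) (n : ℕ) :
    Irrational (T^[n] x) ∧ 0 < T^[n] x ∧ T^[n] x < 1 := by
  induction n with
  | zero => exact h
  | succ k ih => rw [Function.iterate_succ_apply']; exact T_mem _ ih

theorem digit (x : ℝ) (h : Irrational x ∧ 0 < x ∧ x < 1) (n : ℕ) :
    (eps x (n+1) = 1 ∧ 1 ≤ a x (n+1)) ∨ (eps x (n+1) = -1 ∧ 3 ≤ a x (n+1)) := by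
  obtain ⟨-, h0, h1⟩ := Titer_mem x h n
  have hfl : 1 ≤ ⌊1 / (T^[n] x)⌋ := by
    rw [Int.le_floor]
    push_cast
    rw [le_div_iff₀ h0]
    linarith
  simp only [eps, a]
  split_ifs with ho
  · exact Or.inl ⟨rfl, hfl⟩
  · refine Or.inr ⟨rfl, ?_⟩
    rw [Int.not_odd_iff_even] at ho
    obtain ⟨m, hm⟩ := ho
    omega

theorem key (x : ℝ) (h : Irrational x ∧ 0 < x ∧ x < 1) (n : ℕ) :
    0 < q x (n+1) ∧ ((a x (n+1) : ℝ) - 2 + G) * q x (n+1) < q x (n+2) ∧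
      q x (n+2) < ((a x (n+1) : ℝ) + G) * q x (n+1) := by
  have h5 : Real.sqrt 5 ^ 2 = 5 := Real.sq_sqrt (by norm_num)
  have hG2 : G ^ 2 = G + 1 := by unfold G; nlinarith
  have hGl : 1 < G := by
    have : 1 < Real.sqrt 5 := by rw [Real.lt_sqrt] <;> norm_num
    unfold G; linarith
  have hGu : G < 2 := by nlinarith
  induction n with
  | zero =>
    have e : q x 2 = (a x 1 : ℝ) * 1 + (eps x 0 : ℝ) * 0 := rfl
    have e1 : q x 1 = 1 := rfl
    simp only [Nat.zero_add, e, e1]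
    refine ⟨by norm_num, by linarith, by linarith⟩
  | succ k ih =>
    obtain ⟨hp, hl, hu⟩ := ih
    have e : q x (k+1+2) = (a x (k+2) : ℝ) * q x (k+2) + (eps x (k+1) : ℝ) * q x (k+1) := rfl
    show 0 < q x (k+2) ∧ ((a x (k+2) : ℝ) - 2 + G) * q x (k+2) < q x (k+1+2) ∧
      q x (k+1+2) < ((a x (k+2) : ℝ) + G) * q x (k+2)
    rw [e]
    generalize q x (k+1) = u at *
    generalize q x (k+2) = v at *
    rcases digit x h k with ⟨he, ha⟩ | ⟨he, ha⟩
    · have ha' : (1:ℝ) ≤ a x (k+1) := by exact_mod_cast ha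
      have hv : (G - 1) * u < v := by nlinarith
      have hv0 : 0 < v := by nlinarith
      rw [he]; push_cast
      refine ⟨hv0, by nlinarith, ?_⟩
      have : G * ((G - 1) * u) < G * v := by gcongr
      have e2 : G * ((G - 1) * u) = (G^2 - G) * u := by ring
      rw [e2, hG2] at this
      linarith
    · have ha' : (3:ℝ) ≤ a x (k+1) := by exact_mod_cast ha
      have hv : (G + 1) * u < v := by nlinarith
      have hv0 : 0 < v := by nlinarith
      rw [he]; push_cast
      refine ⟨hv0, ?_, by nlinarith⟩
      have : (2 - G) * ((G + 1) * u) < (2 - G) * v :=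
        mul_lt_mul_of_pos_left hv (by linarith)
      have e2 : (2 - G) * ((G + 1) * u) = (2 + G - G^2) * u := by ring
      rw [e2, hG2] at this
      linarith

end OCF

/-- For every irrational `x ∈ (0,1)` the OCF convergent denominators satisfy `q_{n-1} > 0`
for `n ≥ 1` (i.e. `q_n > 0` for all `n ≥ 0`), and
`a_n(x) - 2 + G < q_n/q_{n-1} < a_n(x) + G` for every `n ≥ 1`. -/
theorem ocf_denominator_bounds (x : ℝ) (hirr : Irrational x) (hx : x ∈ Set.Ioo (0 : ℝ) 1) :
    (∀ n : ℕ, 1 ≤ n → 0 < OCF.q x n) ∧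
    (∀ n : ℕ, 1 ≤ n →
      (OCF.a x n : ℝ) - 2 + G < OCF.q x (n + 1) / OCF.q x n ∧
      OCF.q x (n + 1) / OCF.q x n < (OCF.a x n : ℝ) + G) := by
  have hk := key x ⟨hirr, hx.1, hx.2⟩
  refine ⟨?_, ?_⟩
  · rintro (_ | n) hn
    · omega
    · exact (hk n).1
  · rintro (_ | n) hn
    · omega
    · obtain ⟨h0, h1, h2⟩ := hk n
      exact ⟨(lt_div_iff₀ h0).2 h1, (div_lt_iff₀ h0).2 h2⟩
end

section
/- For every irrational x ∈ (0,1) and every n ≥ 1, writing s_n = q_{n−1}/q_n for the ratio of consecutive convergent denominators of the odd continued fraction expansion of x, one has: a_n(x) ≥ 3 if and only if 0 < s_n < g², and a_n(x) = 1 if and only if g² < s_n < G. -/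
open Real MeasureTheory Filter Set

open OCF

theorem OCF.T_mem_s4 (t : ℝ) (h : Irrational t ∧ 0 < t ∧ t < 1) :
    Irrational (T t) ∧ 0 < T t ∧ T t < 1 := by
  obtain ⟨hi, h0, h1⟩ := h
  have hi' : Irrational (1 / t) := by simpa using hi.inv
  have hf : Irrational (Int.fract (1 / t)) := by
    unfold Int.fract
    exact hi'.sub_intCast _
  have hp : 0 < Int.fract (1 / t) := lt_of_le_of_ne (Int.fract_nonneg _) hf.ne_zero.symm
  have hl := Int.fract_lt_one (1 / t)
  unfold T
  rw [if_neg h0.ne']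
  split_ifs
  · exact ⟨hf, hp, hl⟩
  · refine ⟨?_, by linarith, by linarith⟩
    simpa using hf.intCast_sub 1

theorem OCF.iter_mem (x : ℝ) (h : Irrational x ∧ 0 < x ∧ x < 1) (n : ℕ) :
    Irrational (T^[n] x) ∧ 0 < T^[n] x ∧ T^[n] x < 1 := by
  induction n with
  | zero => exact h
  | succ k ih => rw [Function.iterate_succ_apply']; exact T_mem_s4 _ ih

theorem OCF.digit_s4 (x : ℝ) (h : Irrational x ∧ 0 < x ∧ x < 1) (n : ℕ) :
    (a x (n + 1) = 1 ∧ eps x (n + 1) = 1) ∨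
    (3 ≤ a x (n + 1) ∧ (eps x (n + 1) = 1 ∨ eps x (n + 1) = -1)) := by
  obtain ⟨-, h0, h1⟩ := iter_mem x h n
  have hk : 1 ≤ ⌊1 / (T^[n] x)⌋ := by
    rw [Int.le_floor, le_div_iff₀ h0]
    push_cast
    linarith
  simp only [a, eps]
  generalize ⌊1 / (T^[n] x)⌋ = k at hk
  split_ifs with ho
  · obtain ⟨m, rfl⟩ := ho
    simp
    omega
  · rw [Int.not_odd_iff_even] at ho
    obtain ⟨m, rfl⟩ := ho
    simp
    omega

theorem OCF.step (g u v A e : ℝ) (hg : g ^ 2 = 1 - g) (hg0 : 0 < g) (hg1 : g < 1)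
    (hu : 0 ≤ u) (hv : 0 < v) (huv : u < (1 + g) * v)
    (he : e = 1 ∨ (e = -1 ∧ u < g ^ 2 * v)) :
    (A = 1 → 0 < A * v + e * u ∧ g ^ 2 * (A * v + e * u) < v ∧
      v < (1 + g) * (A * v + e * u)) ∧
    (3 ≤ A → 0 < A * v + e * u ∧ v < g ^ 2 * (A * v + e * u)) := by
  have hg2 := hg
  rw [hg] at he ⊢
  have hgv : 0 < g * v := mul_pos hg0 hv
  have hgu : 0 ≤ g * u := mul_nonneg hg0.le hu
  have h2 : g * (g * v) = v - g * v := by linear_combination v * hg2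
  constructor
  · rintro rfl
    rcases he with rfl | ⟨rfl, h⟩
    · have := mul_lt_mul_of_pos_left huv (sub_pos.2 hg1)
      refine ⟨by linarith, by linarith, by linarith⟩
    · have := mul_lt_mul_of_pos_left h hg0
      refine ⟨by linarith, by nlinarith, by linarith⟩
  · intro hA
    have hAv : 3 * v ≤ A * v := mul_le_mul_of_nonneg_right hA hv.le
    have key : (2 + g) * v < A * v + e * u := by
      rcases he with rfl | ⟨rfl, h⟩
      · nlinarith
      · linarith
    have := mul_lt_mul_of_pos_left key (sub_pos.2 hg1)
    refine ⟨by linarith, by linarith⟩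

theorem OCF.gg_facts : gg ^ 2 = 1 - gg ∧ 0 < gg ∧ gg < 1 ∧ G = 1 + gg := by
  have h := Real.sq_sqrt (show (0 : ℝ) ≤ 5 by norm_num)
  have h0 := Real.sqrt_nonneg 5
  unfold gg G
  refine ⟨by linarith, by nlinarith, by nlinarith, by ring⟩

theorem OCF.inv (x : ℝ) (h : Irrational x ∧ 0 < x ∧ x < 1) (n : ℕ) :
    0 ≤ q x n ∧ 0 < q x (n + 1) ∧ q x n < (1 + gg) * q x (n + 1) ∧
    (eps x n = 1 ∨ (eps x n = -1 ∧ q x n < gg ^ 2 * q x (n + 1))) := by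
  obtain ⟨hg, hg0, hg1, -⟩ := gg_facts
  induction n with
  | zero => simp [q, eps]; linarith
  | succ k ih =>
    obtain ⟨hu, hv, huv, he⟩ := ih
    have st := step gg _ _ (a x (k + 1) : ℝ) (eps x k : ℝ) hg hg0 hg1 hu hv huv
      (by exact_mod_cast he)
    have hq : q x (k + 1 + 1) = (a x (k + 1) : ℝ) * q x (k + 1) + (eps x k : ℝ) * q x k := rfl
    rw [hq]
    refine ⟨hv.le, ?_⟩
    rcases digit_s4 x h k with ⟨ha, he'⟩ | ⟨ha, he'⟩
    · obtain ⟨h1, h2, h3⟩ := st.1 (by exact_mod_cast ha)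
      exact ⟨h1, h3, Or.inl he'⟩
    · obtain ⟨h1, h2⟩ := st.2 (by exact_mod_cast ha)
      refine ⟨h1, h2.trans ?_, he'.imp id (fun z => ⟨z, h2⟩)⟩
      apply mul_lt_mul_of_pos_right _ h1
      linarith

/-- For every irrational `x ∈ (0,1)` and every `n ≥ 1`, with `s_n = q_{n-1}/q_n`:
`a_n(x) ≥ 3` iff `0 < s_n < g²`, and `a_n(x) = 1` iff `g² < s_n < G`. -/
theorem ocf_sn_characterization (x : ℝ) (hirr : Irrational x) (hx : x ∈ Set.Ioo (0 : ℝ) 1)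
    (n : ℕ) (hn : 1 ≤ n) :
    ((3 ≤ OCF.a x n) ↔
      (0 < OCF.q x n / OCF.q x (n + 1) ∧ OCF.q x n / OCF.q x (n + 1) < gg ^ 2)) ∧
    ((OCF.a x n = 1) ↔
      (gg ^ 2 < OCF.q x n / OCF.q x (n + 1) ∧ OCF.q x n / OCF.q x (n + 1) < G)) := by
  obtain ⟨k, rfl⟩ : ∃ k, n = k + 1 := ⟨n - 1, by omega⟩
  have h : Irrational x ∧ 0 < x ∧ x < 1 := ⟨hirr, hx.1, hx.2⟩
  obtain ⟨hg, hg0, hg1, hG⟩ := gg_facts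
  obtain ⟨hu, hv, huv, he⟩ := OCF.inv x h k
  have st := OCF.step gg _ _ (OCF.a x (k + 1) : ℝ) (eps x k : ℝ) hg hg0 hg1 hu hv huv
    (by exact_mod_cast he)
  have hq : OCF.q x (k + 1 + 1) =
    (OCF.a x (k + 1) : ℝ) * OCF.q x (k + 1) + (eps x k : ℝ) * OCF.q x k := rfl
  rw [← hq] at st
  rw [hG]
  rcases OCF.digit_s4 x h k with ⟨ha, -⟩ | ⟨ha, -⟩
  · obtain ⟨h1, h2, h3⟩ := st.1 (by exact_mod_cast ha)
    rw [← lt_div_iff₀ h1] at h2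
    rw [← div_lt_iff₀ h1] at h3
    exact ⟨⟨fun z => by omega, fun z => absurd z.2 h2.not_gt⟩, ⟨fun _ => ⟨h2, h3⟩, fun _ => ha⟩⟩
  · obtain ⟨h1, h2⟩ := st.2 (by exact_mod_cast ha)
    rw [← div_lt_iff₀ h1] at h2
    exact ⟨⟨fun _ => ⟨div_pos hv h1, h2⟩, fun _ => ha⟩,
      ⟨fun z => by omega, fun z => absurd z.1 h2.not_gt⟩⟩
end

section
/- For every irrational x ∈ (0,1), the convergents of the odd continued fraction expansion of x converge to x: lim_{n→∞} p_n/q_n = x. -/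
open Real MeasureTheory Filter Set

open OCF

namespace OCF

lemma T_irr {t : ℝ} (h : Irrational t) : Irrational (T t) := by
  have h1 : Irrational (1 / t) := by simpa using h.inv
  have h2 : Irrational (Int.fract (1 / t)) := by
    unfold Int.fract
    exact h1.sub_intCast _
  unfold T
  rw [if_neg h.ne_zero]
  split_ifs
  · exact h2
  · simpa using h2.intCast_sub 1

lemma T_mem_s5 {t : ℝ} (h : Irrational t) : T t ∈ Set.Ioo (0 : ℝ) 1 := by
  have h0 := T_irr h
  have h1 : T t ∈ Set.Icc (0 : ℝ) 1 := by
    have a1 := Int.fract_nonneg (1 / t)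
    have a2 := Int.fract_lt_one (1 / t)
    unfold T
    split_ifs
    · simp
    · exact ⟨a1, a2.le⟩
    · constructor <;> linarith
  exact ⟨lt_of_le_of_ne h1.1 h0.ne_zero.symm, lt_of_le_of_ne h1.2 h0.ne_one⟩

lemma iter_mem_s5 {x : ℝ} (hirr : Irrational x) (hx : x ∈ Set.Ioo (0 : ℝ) 1) (n : ℕ) :
    Irrational (T^[n] x) ∧ T^[n] x ∈ Set.Ioo (0 : ℝ) 1 := by
  induction n with
  | zero => exact ⟨hirr, hx⟩
  | succ n ih =>
    rw [Function.iterate_succ_apply']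
    exact ⟨T_irr ih.1, T_mem_s5 ih.1⟩

lemma floor_ge {t : ℝ} (ht : t ∈ Set.Ioo (0 : ℝ) 1) : 1 ≤ ⌊1 / t⌋ := by
  rw [Int.le_floor]
  rw [le_div_iff₀ ht.1]
  have := ht.2
  push_cast
  linarith

lemma mul_T {t : ℝ} (hi : Irrational t) (ht : t ∈ Set.Ioo (0 : ℝ) 1) : t * T t ≤ 2 / 3 := by
  have hT := T_mem_s5 hi
  obtain ⟨h0, h1⟩ := ht
  by_cases h : t ≤ 2 / 3
  · nlinarith [hT.1, hT.2]
  · push Not at h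
    have hf : ⌊1 / t⌋ = 1 := by
      rw [Int.floor_eq_iff]
      constructor
      · rw [le_div_iff₀ h0]; push_cast; linarith
      · rw [div_lt_iff₀ h0]; push_cast; linarith
    have : T t = 1 / t - 1 := by
      unfold T
      rw [if_neg h0.ne', hf, if_pos odd_one, Int.fract, hf]
      simp
    rw [this, mul_sub, mul_one_div_cancel h0.ne']
    linarith

lemma key_s5 {x : ℝ} (hirr : Irrational x) (hx : x ∈ Set.Ioo (0 : ℝ) 1) (n : ℕ) :
    (a x (n + 1) : ℝ) - 1 / T^[n] x = - (eps x (n + 1) : ℝ) * T^[n + 1] x := by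
  obtain ⟨_, h⟩ := iter_mem_s5 hirr hx n
  rw [Function.iterate_succ_apply']
  simp only [a, eps]
  generalize T^[n] x = t at h ⊢
  unfold T
  rw [if_neg h.1.ne']
  have := Int.floor_add_fract (1 / t)
  split_ifs <;> push_cast <;> linarith

lemma eps_cases (x : ℝ) (n : ℕ) : eps x n = 1 ∨ eps x n = -1 := by
  cases n with
  | zero => left; rfl
  | succ n => simp only [eps]; split_ifs <;> simp

lemma D_rec {x : ℝ} (hirr : Irrational x) (hx : x ∈ Set.Ioo (0 : ℝ) 1) (n : ℕ) :
    x * q x (n + 1) - p x (n + 1) = - (eps x n : ℝ) * T^[n] x * (x * q x n - p x n) := by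
  induction n with
  | zero => simp [q, p, eps]
  | succ n ih =>
    have h := (iter_mem_s5 hirr hx n).2.1
    have hk := key_s5 hirr hx n
    rw [← hk]
    have hs : (eps x n : ℝ) * eps x n = 1 := by
      rcases eps_cases x n with e | e <;> rw [e] <;> norm_num
    have h2 : (1 / T^[n] x) * (x * q x (n + 1) - p x (n + 1))
        = - (eps x n : ℝ) * (x * q x n - p x n) := by
      rw [ih]; field_simp
    have hq : q x (n + 1 + 1) = (a x (n + 1) : ℝ) * q x (n + 1) + (eps x n : ℝ) * q x n := rfl
    have hp : p x (n + 1 + 1) = (a x (n + 1) : ℝ) * p x (n + 1) + (eps x n : ℝ) * p x n := rfl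
    rw [hq, hp]
    linear_combination h2

lemma e_rec {x : ℝ} (hirr : Irrational x) (hx : x ∈ Set.Ioo (0 : ℝ) 1) (n : ℕ) :
    |x * q x (n + 1) - p x (n + 1)| = T^[n] x * |x * q x n - p x n| := by
  have h := (iter_mem_s5 hirr hx n).2.1
  rw [D_rec hirr hx n, abs_mul, abs_mul, abs_of_pos h]
  rcases eps_cases x n with e | e <;> rw [e] <;> norm_num

lemma e_bound {x : ℝ} (hirr : Irrational x) (hx : x ∈ Set.Ioo (0 : ℝ) 1) (n : ℕ) :
    |x * q x n - p x n| ≤ 2 * (9 / 10) ^ n ∧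
    |x * q x (n + 1) - p x (n + 1)| ≤ 2 * (9 / 10) ^ (n + 1) := by
  induction n with
  | zero =>
    refine ⟨by norm_num [q, p], ?_⟩
    rw [e_rec hirr hx 0]
    have := hx.2
    norm_num [q, p]
    linarith
  | succ n ih =>
    refine ⟨ih.2, ?_⟩
    rw [e_rec hirr hx (n + 1), e_rec hirr hx n, Function.iterate_succ_apply', ← mul_assoc,
      mul_comm (T _)]
    obtain ⟨h1, h2⟩ := iter_mem_s5 hirr hx n
    have h3 := mul_T h1 h2
    have h4 : (0 : ℝ) < (9 / 10) ^ n := by positivity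
    have h5 := mul_le_mul h3 ih.1 (abs_nonneg _) (by norm_num)
    rw [pow_succ, pow_succ]
    linarith

lemma a_facts {x : ℝ} (hirr : Irrational x) (hx : x ∈ Set.Ioo (0 : ℝ) 1) (n : ℕ) :
    1 ≤ a x (n + 1) ∧ (eps x (n + 1) = -1 → 3 ≤ a x (n + 1)) := by
  have h := floor_ge (iter_mem_s5 hirr hx n).2
  simp only [a, eps]
  split_ifs with ho
  · exact ⟨h, by norm_num⟩
  · rw [Int.not_odd_iff_even] at ho
    obtain ⟨k, hk⟩ := ho
    constructor
    · omega
    · intro _; omega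

lemma q_inv {x : ℝ} (hirr : Irrational x) (hx : x ∈ Set.Ioo (0 : ℝ) 1) (n : ℕ) :
    0 ≤ q x n ∧ 0 < q x (n + 1) ∧ q x n ≤ 2 * q x (n + 1) ∧
      (eps x n = -1 → 2 * q x n ≤ q x (n + 1)) := by
  induction n with
  | zero => norm_num [q, eps]
  | succ n ih =>
    obtain ⟨h0, h1, h2, h3⟩ := ih
    have hq : q x (n + 1 + 1) = (a x (n + 1) : ℝ) * q x (n + 1) + (eps x n : ℝ) * q x n := rfl
    obtain ⟨f1, f2⟩ := a_facts hirr hx n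
    have f1' : (1 : ℝ) ≤ a x (n + 1) := by exact_mod_cast f1
    have g1 := mul_le_mul_of_nonneg_right f1' h1.le
    have g2 : q x (n + 1) ≤ 2 * q x (n + 1 + 1) ∧
        (eps x (n + 1) = -1 → 2 * q x (n + 1) ≤ q x (n + 1 + 1)) := by
      rw [hq]
      rcases eps_cases x n with e | e
      · rw [e]; push_cast
        refine ⟨by linarith, fun he => ?_⟩
        have f2' : (3 : ℝ) ≤ a x (n + 1) := by exact_mod_cast f2 he
        have := mul_le_mul_of_nonneg_right f2' h1.le
        linarith
      · have := h3 e
        rw [e]; push_cast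
        refine ⟨by linarith, fun he => ?_⟩
        have f2' : (3 : ℝ) ≤ a x (n + 1) := by exact_mod_cast f2 he
        have := mul_le_mul_of_nonneg_right f2' h1.le
        linarith
    exact ⟨h1.le, by linarith [g2.1], g2.1, g2.2⟩

lemma q_int (x : ℝ) (n : ℕ) : (∃ z : ℤ, q x n = z) ∧ (∃ z : ℤ, q x (n + 1) = z) := by
  induction n with
  | zero => exact ⟨⟨0, by simp [q]⟩, ⟨1, by simp [q]⟩⟩
  | succ n ih =>
    refine ⟨ih.2, ?_⟩
    obtain ⟨⟨u, hu⟩, ⟨v, hv⟩⟩ := ih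
    have hq : q x (n + 1 + 1) = (a x (n + 1) : ℝ) * q x (n + 1) + (eps x n : ℝ) * q x n := rfl
    exact ⟨a x (n + 1) * v + eps x n * u, by rw [hq, hu, hv]; push_cast; ring⟩

lemma q_ge {x : ℝ} (hirr : Irrational x) (hx : x ∈ Set.Ioo (0 : ℝ) 1) (n : ℕ) :
    1 ≤ q x (n + 1) := by
  obtain ⟨z, hz⟩ := (q_int x n).2
  have h := (q_inv hirr hx n).2.1
  rw [hz] at h ⊢
  have : 0 < z := by exact_mod_cast h
  exact_mod_cast this

end OCF

/-- For every irrational `x ∈ (0,1)`, the OCF convergents converge to `x`: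
`lim_{n→∞} p_n/q_n = x`. -/
theorem ocf_convergents_tendsto (x : ℝ) (hirr : Irrational x) (hx : x ∈ Set.Ioo (0 : ℝ) 1) :
    Filter.Tendsto (fun n : ℕ => OCF.p x (n + 1) / OCF.q x (n + 1)) Filter.atTop (nhds x) := by
  rw [tendsto_iff_dist_tendsto_zero]
  have hl : Filter.Tendsto (fun n : ℕ => (2 : ℝ) * (9 / 10) ^ (n + 1)) Filter.atTop (nhds 0) := by
    have h := (tendsto_pow_atTop_nhds_zero_of_lt_one (r := (9 / 10 : ℝ)) (by norm_num)
      (by norm_num)).const_mul 2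
    rw [mul_zero] at h
    exact h.comp (Filter.tendsto_add_atTop_nat 1)
  refine squeeze_zero (fun _ => dist_nonneg) (fun n => ?_) hl
  have hq := q_ge hirr hx n
  have hb := (e_bound hirr hx n).2
  have hq0 : 0 < OCF.q x (n + 1) := by linarith
  rw [dist_comm, Real.dist_eq]
  have : x - OCF.p x (n + 1) / OCF.q x (n + 1)
      = (x * OCF.q x (n + 1) - OCF.p x (n + 1)) / OCF.q x (n + 1) := by
    field_simp
  rw [this, abs_div, abs_of_pos hq0]
  exact (div_le_self (abs_nonneg _) hq).trans hb
end

section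
/- The measure ρ on the Borel subsets of [0,1] defined by ρ(A) = (3 log G)^{−1} ∫_A (1/(x+G−1) − 1/(x−G−1)) dx is a probability measure and is invariant under the odd Gauss map T, i.e. ρ(T^{−1}(A)) = ρ(A) for every Borel set A ⊆ [0,1]. -/
open Real MeasureTheory Filter Set

open OCF

namespace OCF

/-- Schweiger's invariant measure `ρ` for the odd Gauss map. -/
noncomputable def rho : Measure ℝ :=
  (volume.restrict (Set.Icc (0 : ℝ) 1)).withDensity
    (fun x => ENNReal.ofReal ((3 * Real.log G)⁻¹ * (1 / (x + G - 1) - 1 / (x - G - 1))))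

end OCF

namespace OCF

noncomputable def fden (x : ℝ) : ℝ := (3 * Real.log G)⁻¹ * (1 / (x + G - 1) - 1 / (x - G - 1))

lemma G_sq : G ^ 2 = G + 1 := by
  have h : Real.sqrt 5 ^ 2 = 5 := Real.sq_sqrt (by norm_num)
  unfold G; nlinarith

lemma G_gt : 3 / 2 < G := by
  have h : Real.sqrt 5 ^ 2 = 5 := Real.sq_sqrt (by norm_num)
  have h0 := Real.sqrt_nonneg 5
  unfold G; nlinarith

lemma G_lt : G < 2 := by
  have h := G_sq
  have h0 := G_gt
  nlinarith

lemma logG_pos : 0 < Real.log G := Real.log_pos (by have := G_gt; linarith)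

lemma rho_apply (X : Set ℝ) :
    rho X = ∫⁻ x in X ∩ Icc 0 1, ENNReal.ofReal (fden x) := by
  unfold rho
  rw [withDensity_apply', Measure.restrict_restrict' measurableSet_Icc]
  rfl

lemma fden_nonneg {x : ℝ} (hx : x ∈ Icc (0:ℝ) 1) : 0 ≤ fden x := by
  have h1 := G_gt
  have h2 := logG_pos
  obtain ⟨h3, h4⟩ := hx
  unfold fden
  have : 1 / (x + G - 1) - 1 / (x - G - 1) = 1 / (x + G - 1) + 1 / (G + 1 - x) := by
    have : x - G - 1 = -(G + 1 - x) := by ring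
    rw [this, one_div_neg_eq_neg_one_div, sub_neg_eq_add]
  rw [this]
  have a1 : 0 < x + G - 1 := by linarith
  have a2 : 0 < G + 1 - x := by linarith
  positivity

lemma prob : rho univ = 1 := by
  have h1 := G_gt
  have h2 := logG_pos
  have hd : ∀ x ∈ uIcc (0:ℝ) 1, HasDerivAt
      (fun x => (3 * Real.log G)⁻¹ * (Real.log (x + G - 1) - Real.log (x - G - 1))) (fden x) x := by
    intro x hx
    rw [uIcc_of_le zero_le_one] at hx
    obtain ⟨h3, h4⟩ := hx
    unfold fden
    refine HasDerivAt.const_mul _ (HasDerivAt.sub ?_ ?_)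
    · exact (((hasDerivAt_id x).add_const G).sub_const 1).log (by simp; linarith)
    · exact (((hasDerivAt_id x).sub_const G).sub_const 1).log (by simp; linarith)
  have hc : ContinuousOn fden (uIcc 0 1) := by
    rw [uIcc_of_le zero_le_one]
    unfold fden
    refine ContinuousOn.mul continuousOn_const (ContinuousOn.sub ?_ ?_)
    · refine ContinuousOn.div continuousOn_const (by fun_prop) ?_
      rintro x ⟨h3, h4⟩; linarith
    · refine ContinuousOn.div continuousOn_const (by fun_prop) ?_
      rintro x ⟨h3, h4⟩; linarith
  have hi := intervalIntegral.integral_eq_sub_of_hasDerivAt hd hc.intervalIntegrable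
  rw [rho_apply, univ_inter, ← ofReal_integral_eq_lintegral_ofReal]
  · rw [integral_Icc_eq_integral_Ioc, ← intervalIntegral.integral_of_le zero_le_one, hi]
    have e1 : (1:ℝ) + G - 1 = G := by ring
    have e2 : (1:ℝ) - G - 1 = -G := by ring
    have e3 : (0:ℝ) + G - 1 = G⁻¹ := by
      have := G_sq
      field_simp; nlinarith
    have e4 : (0:ℝ) - G - 1 = -G ^ 2 := by rw [G_sq]; ring
    simp only [e1, e2, e3, e4, Real.log_neg_eq_log, Real.log_inv, Real.log_pow]
    rw [← ENNReal.ofReal_one]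
    congr 1
    field_simp
    push_cast
    ring
  · rw [uIcc_of_le zero_le_one] at hc
    exact hc.integrableOn_Icc
  · exact (ae_restrict_iff' measurableSet_Icc).2 (ae_of_all _ fun x hx => fden_nonneg hx)

noncomputable def u (t : ℝ) : ℝ := 1 / (t - 2 + G)

lemma u_anti {t : ℝ} (ht : 1 < t) : u (t + 2) ≤ u t := by
  have := G_gt
  unfold u
  apply one_div_le_one_div_of_le <;> linarith

lemma key_s6 {t : ℝ} (ht : 1 < t) :
    (t ^ 2)⁻¹ * fden t⁻¹ = (3 * Real.log G)⁻¹ * (u t - u (t + 2)) := by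
  have h1 := G_gt
  have h2 := G_sq
  have e1 : t⁻¹ + G - 1 = (G - 1) * (t + G) / t := by
    field_simp; nlinarith
  have e2 : t⁻¹ - G - 1 = - ((G + 1) * (t - 2 + G) / t) := by
    field_simp; nlinarith
  unfold fden u
  rw [e1, e2]
  have n1 : G - 1 ≠ 0 := by linarith
  have n2 : G + 1 ≠ 0 := by linarith
  have n3 : t + G ≠ 0 := by linarith
  have n4 : t - 2 + G ≠ 0 := by linarith
  have n5 : t ≠ 0 := by linarith
  have n6 : t + 2 - 2 + G ≠ 0 := by linarith
  rw [mul_left_comm]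
  congr 1
  have i1 : (G - 1)⁻¹ = G := by
    rw [inv_eq_iff_eq_inv, eq_comm, inv_eq_iff_eq_inv]; field_simp; nlinarith
  have i2 : (G + 1)⁻¹ = 2 - G := by
    field_simp; nlinarith
  have e3 : t + 2 - 2 + G = t + G := by ring
  rw [e3]
  have : (t ^ 2)⁻¹ * (1 / ((G - 1) * (t + G) / t) - 1 / -((G + 1) * (t - 2 + G) / t))
     = (G - 1)⁻¹ / (t * (t + G)) + (G + 1)⁻¹ / (t * (t - 2 + G)) := by
    rw [one_div_neg_eq_neg_one_div]
    field_simp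
    ring
  rw [this, i1, i2]
  field_simp
  ring

lemma branch (a s : ℝ) (hs : |s| = 1) (B : Set ℝ) (hB : MeasurableSet B)
    (h : ∀ y ∈ B, 1 < a + s * y) :
    ∫⁻ x in (fun y => (a + s * y)⁻¹) '' B, ENNReal.ofReal (fden x) =
      ∫⁻ y in B, ENNReal.ofReal ((3 * Real.log G)⁻¹ * (u (a + s * y) - u (a + s * y + 2))) := by
  have hs0 : s ≠ 0 := by rintro rfl; simp at hs
  rw [lintegral_image_eq_lintegral_abs_deriv_mul (f' := fun y => - (s * 1) / (a + s * y) ^ 2) hB]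
  · refine setLIntegral_congr_fun hB fun y hy => ?_
    have hy' := h y hy
    rw [← ENNReal.ofReal_mul (abs_nonneg _), ← key_s6 hy']
    congr 2
    rw [abs_div, abs_neg, mul_one, hs, abs_of_nonneg (sq_nonneg _), one_div]
  · intro y hy
    have hy' := h y hy
    exact ((((hasDerivAt_id y).const_mul s).const_add a).fun_inv (by simp; linarith)).hasDerivWithinAt
  · intro y hy z hz hyz
    have := inv_injective hyz
    exact mul_left_cancel₀ hs0 (add_left_cancel this)

lemma u_tendsto (t : ℝ) : Tendsto (fun k : ℕ => u (t + 2 * k)) atTop (nhds 0) := by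
  unfold u
  simp only [one_div]
  apply tendsto_inv_atTop_zero.comp
  have : Tendsto (fun k : ℕ => (2:ℝ) * k) atTop atTop :=
    tendsto_natCast_atTop_atTop.const_mul_atTop (by norm_num)
  have h := tendsto_atTop_add_const_left _ (t - 2 + G) this
  refine h.congr fun k => by ring

lemma tele {t : ℝ} (ht : 1 < t) :
    ∑' k : ℕ, ENNReal.ofReal ((3 * Real.log G)⁻¹ * (u (t + 2 * k) - u (t + 2 * k + 2)))
      = ENNReal.ofReal ((3 * Real.log G)⁻¹ * u t) := by
  have h2 := logG_pos
  have hn : ∀ k : ℕ, 0 ≤ (3 * Real.log G)⁻¹ * (u (t + 2 * k) - u (t + 2 * k + 2)) := by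
    intro k
    have hk : (0:ℝ) ≤ k := Nat.cast_nonneg k
    have := u_anti (t := t + 2 * k) (by linarith)
    have : 0 ≤ u (t + 2 * k) - u (t + 2 * k + 2) := by linarith
    positivity
  have hs : HasSum (fun k : ℕ => (3 * Real.log G)⁻¹ * (u (t + 2 * k) - u (t + 2 * k + 2)))
      ((3 * Real.log G)⁻¹ * u t) := by
    rw [hasSum_iff_tendsto_nat_of_nonneg hn]
    have : ∀ n : ℕ, ∑ k ∈ Finset.range n, (3 * Real.log G)⁻¹ * (u (t + 2 * k) - u (t + 2 * k + 2))
        = (3 * Real.log G)⁻¹ * (u t - u (t + 2 * n)) := by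
      intro n
      rw [← Finset.mul_sum]
      have := Finset.sum_range_sub' (fun k : ℕ => u (t + 2 * k)) n
      simp only [Nat.cast_zero, mul_zero, add_zero] at this
      rw [← this]
      congr 1
      refine Finset.sum_congr rfl fun k _ => ?_
      push_cast
      congr 2
      ring
    simp only [this]
    simpa using ((u_tendsto t).const_sub (u t)).const_mul (3 * Real.log G)⁻¹
  rw [← ENNReal.ofReal_tsum_of_nonneg hn hs.summable, hs.tsum_eq]

/-- offset and sign of the branches -/
noncomputable def aa (p : Bool × ℕ) : ℝ := (if p.1 then 1 else 3) + 2 * (p.2 : ℝ)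
noncomputable def ss (p : Bool × ℕ) : ℝ := if p.1 then 1 else -1
def NN (p : Bool × ℕ) : ℤ := (if p.1 then 1 else 2) + 2 * (p.2 : ℤ)

lemma aass_gt (p : Bool × ℕ) {y : ℝ} (hy : y ∈ Ioo (0:ℝ) 1) : 1 < aa p + ss p * y := by
  obtain ⟨b, k⟩ := p
  have hk : (0:ℝ) ≤ k := Nat.cast_nonneg k
  obtain ⟨h1, h2⟩ := hy
  cases b <;> simp [aa, ss] <;> linarith

lemma abs_ss (p : Bool × ℕ) : |ss p| = 1 := by
  obtain ⟨b, k⟩ := p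
  cases b <;> simp [ss]

lemma floor_branch (p : Bool × ℕ) {y : ℝ} (hy : y ∈ Ioo (0:ℝ) 1) :
    ⌊aa p + ss p * y⌋ = NN p := by
  obtain ⟨b, k⟩ := p
  obtain ⟨h1, h2⟩ := hy
  rw [Int.floor_eq_iff]
  cases b <;> simp [aa, ss, NN] <;> constructor <;> linarith

lemma NN_inj : Function.Injective NN := by
  rintro ⟨b, k⟩ ⟨c, l⟩ h
  cases b <;> cases c <;> simp [NN] at h ⊢ <;> omega

lemma NN_odd (p : Bool × ℕ) : Odd (NN p) ↔ p.1 = true := by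
  obtain ⟨b, k⟩ := p
  cases b <;> simp [NN, Int.odd_iff]

lemma T_branch (p : Bool × ℕ) {y : ℝ} (hy : y ∈ Ioo (0:ℝ) 1) :
    T (aa p + ss p * y)⁻¹ = y := by
  have h := aass_gt p hy
  have hf := floor_branch p hy
  unfold T
  rw [if_neg (inv_ne_zero (by linarith)), one_div, inv_inv, hf]
  simp only [NN_odd, Int.fract, hf]
  obtain ⟨b, k⟩ := p
  cases b
  · simp [aa, ss, NN]; ring
  · simp [aa, ss, NN]

lemma exists_branch {x : ℝ} (hx : x ∈ Icc (0:ℝ) 1) (hn : x ∉ range (fun n : ℤ => (n : ℝ)⁻¹)) :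
    ∃ p, T x ∈ Ioo (0:ℝ) 1 ∧ x = (aa p + ss p * T x)⁻¹ := by
  have hx0 : x ≠ 0 := by rintro rfl; exact hn ⟨0, by simp⟩
  have hxp : 0 < x := lt_of_le_of_ne hx.1 (Ne.symm hx0)
  have h1 : 1 ≤ 1 / x := by rw [le_div_iff₀ hxp]; linarith [hx.2]
  have hfl : 1 ≤ ⌊1 / x⌋ := Int.le_floor.2 (by simpa using h1)
  have hfr : 0 < Int.fract (1 / x) := by
    refine lt_of_le_of_ne (Int.fract_nonneg _) fun h0 => hn ⟨⌊1 / x⌋, ?_⟩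
    have := Int.floor_add_fract (1 / x)
    rw [← h0, add_zero] at this
    simp only [this]
    simp
  have hfr1 := Int.fract_lt_one (1 / x)
  have hsum := Int.floor_add_fract (1 / x)
  by_cases ho : Odd ⌊1 / x⌋
  · have hT : T x = Int.fract (1 / x) := by simp only [T, if_neg hx0, if_pos ho]
    obtain ⟨m, hm⟩ := ho
    refine ⟨(true, m.toNat), by rw [hT]; exact ⟨hfr, hfr1⟩, ?_⟩
    have hmc : ((m.toNat : ℕ) : ℝ) = (m : ℝ) := by
      have : ((m.toNat : ℕ) : ℤ) = m := Int.toNat_of_nonneg (by omega)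
      exact_mod_cast this
    have key_s6 : aa (true, m.toNat) + ss (true, m.toNat) * T x = 1 / x := by
      have hm' : (⌊1 / x⌋ : ℝ) = 2 * m + 1 := by exact_mod_cast hm
      simp only [aa, ss, if_true, hmc, hT]
      linarith
    rw [key_s6]; simp
  · have hT : T x = 1 - Int.fract (1 / x) := by simp only [T, if_neg hx0, if_neg ho]
    rw [Int.not_odd_iff_even] at ho
    obtain ⟨m, hm⟩ := ho
    refine ⟨(false, (m - 1).toNat), by rw [hT]; constructor <;> linarith, ?_⟩
    have hmc : (((m - 1).toNat : ℕ) : ℝ) = (m : ℝ) - 1 := by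
      have : (((m - 1).toNat : ℕ) : ℤ) = m - 1 := Int.toNat_of_nonneg (by omega)
      exact_mod_cast this
    have key_s6 : aa (false, (m - 1).toNat) + ss (false, (m - 1).toNat) * T x = 1 / x := by
      have hm' : (⌊1 / x⌋ : ℝ) = m + m := by exact_mod_cast hm
      simp only [aa, ss, hmc, hT, Bool.false_eq_true, if_false]
      linarith
    rw [key_s6]; simp

lemma fden_eq (y : ℝ) : fden y = (3 * Real.log G)⁻¹ * u (1 + y) + (3 * Real.log G)⁻¹ * u (3 - y) := by
  unfold fden u
  have e1 : 1 + y - 2 + G = y + G - 1 := by ring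
  have e2 : 3 - y - 2 + G = -(y - G - 1) := by ring
  rw [e1, e2, one_div_neg_eq_neg_one_div]
  ring

lemma sum_branches {y : ℝ} (hy : y ∈ Ioo (0:ℝ) 1) :
    ∑' p : Bool × ℕ, ENNReal.ofReal ((3 * Real.log G)⁻¹ *
      (u (aa p + ss p * y) - u (aa p + ss p * y + 2))) = ENNReal.ofReal (fden y) := by
  have h2 := logG_pos
  have h3 := G_gt
  obtain ⟨hy0, hy1⟩ := hy
  have u1 : 0 ≤ u (1 + y) := by
    unfold u
    have : 0 < 1 + y - 2 + G := by linarith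
    positivity
  have u2 : 0 ≤ u (3 - y) := by
    unfold u
    have : 0 < 3 - y - 2 + G := by linarith
    positivity
  rw [ENNReal.tsum_prod', tsum_bool, fden_eq, ENNReal.ofReal_add (by positivity) (by positivity),
    add_comm, ← tele (t := 1 + y) (by linarith), ← tele (t := 3 - y) (by linarith)]
  have e1 : ∀ k : ℕ, aa (true, k) + ss (true, k) * y = 1 + y + 2 * k := by
    intro k; simp [aa, ss]; ring
  have e2 : ∀ k : ℕ, aa (false, k) + ss (false, k) * y = 3 - y + 2 * k := by
    intro k; simp [aa, ss]; ring
  simp only [e1, e2]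

lemma fden_meas : Measurable fden := by
  unfold fden; fun_prop

lemma u_meas : Measurable u := by
  unfold u; fun_prop

lemma invariant (A : Set ℝ) (hA : MeasurableSet A) (hA1 : A ⊆ Icc (0 : ℝ) 1) :
    rho (T ⁻¹' A) = rho A := by
  have hB : MeasurableSet (A ∩ Ioo 0 1) := hA.inter measurableSet_Ioo
  set B := A ∩ Ioo (0:ℝ) 1 with hBdef
  set φ : Bool × ℕ → ℝ → ℝ := fun p y => (aa p + ss p * y)⁻¹ with hφ
  set C : Set ℝ := range (fun n : ℤ => (n : ℝ)⁻¹) with hC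
  have hC0 : volume C = 0 := (countable_range _).measure_zero _
  have hS1 : (⋃ p, φ p '' B) ⊆ T ⁻¹' A ∩ Icc 0 1 := by
    rintro x hx
    obtain ⟨p, y, hy, rfl⟩ := mem_iUnion.1 hx
    have h := aass_gt p hy.2
    refine ⟨?_, ?_, ?_⟩
    · change T (aa p + ss p * y)⁻¹ ∈ A
      rw [T_branch p hy.2]; exact hy.1
    · exact inv_nonneg.2 (by linarith)
    · exact inv_le_one_of_one_le₀ h.le
  have hS2 : T ⁻¹' A ∩ Icc 0 1 ⊆ (⋃ p, φ p '' B) ∪ C := by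
    rintro x ⟨hx, hx1⟩
    by_cases hc : x ∈ C
    · exact Or.inr hc
    · obtain ⟨p, hT, he⟩ := exists_branch hx1 hc
      exact Or.inl (mem_iUnion.2 ⟨p, T x, ⟨hx, hT⟩, he.symm⟩)
  have hae : (T ⁻¹' A ∩ Icc 0 1 : Set ℝ) =ᵐ[volume] (⋃ p, φ p '' B : Set ℝ) := by
    refine Filter.EventuallyLE.antisymm ?_ hS1.eventuallyLE
    refine hS2.eventuallyLE.trans ?_
    exact (union_ae_eq_left_of_ae_eq_empty (ae_eq_empty.2 hC0)).le
  have hae2 : (A ∩ Icc 0 1 : Set ℝ) =ᵐ[volume] B :=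
    (ae_eq_refl A).inter Ioo_ae_eq_Icc.symm
  have hinj : ∀ p, InjOn (φ p) B := by
    intro p y hy z hz h
    have := congrArg T h
    simp only [hφ] at this
    rwa [T_branch p hy.2, T_branch p hz.2] at this
  have hdisj : Pairwise (Function.onFun Disjoint fun p => φ p '' B) := by
    intro p q hpq
    refine Set.disjoint_left.2 ?_
    rintro x ⟨y, hy, rfl⟩ ⟨z, hz, h⟩
    have h' := inv_injective h
    apply hpq
    apply NN_inj
    rw [← floor_branch p hy.2, ← floor_branch q hz.2, h']
  rw [rho_apply, rho_apply, setLIntegral_congr hae, setLIntegral_congr hae2,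
    lintegral_iUnion (fun p => hB.image_of_measurable_injOn (by fun_prop) (hinj p)) hdisj]
  have hb : ∀ p, ∫⁻ x in φ p '' B, ENNReal.ofReal (fden x) = _ := fun p =>
    branch (aa p) (ss p) (abs_ss p) B hB (fun y hy => aass_gt p hy.2)
  simp only [hb]
  rw [← lintegral_tsum]
  · exact setLIntegral_congr_fun hB fun y hy => sum_branches hy.2
  · intro p
    have := u_meas
    fun_prop

end OCF

/-- The measure `ρ(A) = (3 log G)⁻¹ ∫_A (1/(x+G-1) - 1/(x-G-1)) dx` on the Borel subsets of
`[0,1]` is a probability measure invariant under the odd Gauss map `T`. -/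
theorem ocf_rho_invariant :
    IsProbabilityMeasure OCF.rho ∧
    ∀ A : Set ℝ, MeasurableSet A → A ⊆ Set.Icc (0 : ℝ) 1 →
      OCF.rho (T ⁻¹' A) = OCF.rho A := by
  exact ⟨⟨OCF.prob⟩, OCF.invariant⟩
end
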